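/- (Theorem 1, perturbed case.) Let N ≥ 1, h > 0, κ > 1, let M, D₂, LC̄₃, LD₄, LD₅ and L, G be real matrices of compatible sizes, and let P, Q be real symmetric positive definite N×N matrices with MᵀP + PM = −Q. Define c₈ = √(κ·λ_max(P)/λ_min(P)) and c₉ = λ_min(Q) − ‖2PLC̄₃‖·c₈ − ( ‖2PD₂‖ + ‖PLD₅‖ + (‖2PD₂‖ + ‖2PLD₄‖)·c₈ + ‖PLD₅‖·c₈ )/h, and assume c₉ > 0. Then there exist positive constants α₂, β₂, γ₂, γ₃ (depending only on P, Q, M, L, G, D₂, C̄₃, D₄, D₅, h, κ) with the following property: for all constants d₂ ≥ 0 and m₀ ≥ 0, all continuous Γ₂, Γ₃ : ℝ → ℝ^N with ‖Γ₂(t)‖ ≤ (d₂/2)·h and ‖Γ₃(t)‖ ≤ ‖G‖·(h·m₀ + d₂·h) for all t ≥ 0, and every differentiable e : ℝ → ℝ^N with e(t) ≠ 0 for all t, satisfying for all t ≥ 0 the delayed dynamics e'(t) = M·e(t) + (1/h)·D₂·(e(t) − e(t−h)) + LC̄₃·e(t−h) + (1/h)·LD₄·e(t−h) − (1/(2h))·LD₅·(e(t)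 + e(t−2h)) − Γ₂(t) − L·Γ₃(t) and the Razumikhin condition e(t+θ)ᵀP e(t+θ) ≤ κ·e(t)ᵀP e(t) for all θ ∈ [−2h, 0], one has, for all t ≥ 0, ‖e(t)‖ ≤ α₂·‖e(0)‖·e^{−β₂ t} + γ₂·d₂·h + γ₃·m₀·h. -/

import Mathlib

open Matrix

/-- The operator norm of a square real matrix induced by the Euclidean norm. -/
noncomputable def l2OpNorm {N : ℕ} (M : Matrix (Fin N) (Fin N) ℝ) : ℝ :=
  ‖Matrix.toEuclideanCLM (𝕜 := ℝ) M‖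

/-!
With `V x = ⟪x, P x⟫`, the Razumikhin condition and the equivalence of `V` with `‖·‖²` turn every
delayed state into a multiple `c₈ ‖e t‖` of the current error, so along a trajectory
`V' ≤ -c₉ ‖e‖² + s ‖e‖`, where `s` bounds the perturbation. Young's inequality absorbs the linear
term into half of the decay at the cost of the constant `s² / (2 c₉)`, Grönwall's inequality bounds
`V`, and taking square roots gives the estimate for `‖e‖`.
-/

open Set
open scoped RealInnerProductSpace

lemma le_sqrt_div_mul_of_mul_sq_le_mul_sq {l u a b : ℝ} (hl : 0 < l) (hb : 0 ≤ b)
    (hab : l * a ^ 2 ≤ u * b ^ 2) : a ≤ √(u / l) * b := by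
  have hsq : a ^ 2 ≤ u / l * b ^ 2 := by
    rw [div_mul_eq_mul_div, le_div_iff₀ hl]
    linarith
  calc a ≤ √(a ^ 2) := Real.le_sqrt_of_sq_le le_rfl
    _ ≤ √(u / l * b ^ 2) := Real.sqrt_le_sqrt hsq
    _ = √(u / l) * b := by rw [Real.sqrt_mul' _ (sq_nonneg b), Real.sqrt_sq hb]

lemma mul_le_half_mul_sq_add_sq_div {c : ℝ} (hc : 0 < c) (s r : ℝ) :
    s * r ≤ c / 2 * r ^ 2 + s ^ 2 / (2 * c) := by
  have hgap : c / 2 * r ^ 2 + s ^ 2 / (2 * c) - s * r = (c * r - s) ^ 2 / (2 * c) := by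
    field_simp
    ring
  have : 0 ≤ (c * r - s) ^ 2 / (2 * c) := by positivity
  linarith

lemma le_mul_exp_add_div_of_deriv_right_le {V V' : ℝ → ℝ} {b K : ℝ} (hb : 0 < b) (hK : 0 ≤ K)
    (hV : ContinuousOn V (Ici 0)) (hV' : ∀ t, 0 ≤ t → HasDerivWithinAt V (V' t) (Ici t) t)
    (hle : ∀ t, 0 ≤ t → V' t ≤ -b * V t + K) {t : ℝ} (ht : 0 ≤ t) :
    V t ≤ V 0 * Real.exp (-b * t) + K / b := by
  have hbound : V t ≤ gronwallBound (V 0) (-b) K (t - 0) :=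
    le_gronwallBound_of_liminf_deriv_right_le (hV.mono Icc_subset_Ici_self)
      (fun s hs _ hr => (hV' s hs.1).liminf_right_slope_le hr) le_rfl
      (fun s hs => hle s hs.1) t (right_mem_Icc.2 ht)
  have hexp : 0 ≤ K / b * Real.exp (-b * t) := by positivity
  rw [gronwallBound_of_K_ne_0 (neg_ne_zero.2 hb.ne'), sub_zero, div_neg] at hbound
  linarith

section QuadraticForm

variable {E : Type*} [NormedAddCommGroup E] [InnerProductSpace ℝ E] {P : E →L[ℝ] E}

lemma hasDerivWithinAt_inner_apply_self (hP : (P : E →ₗ[ℝ] E).IsSymmetric) {e : ℝ → E} {v : E}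
    {s : Set ℝ} {t : ℝ} (he : HasDerivWithinAt e v s t) :
    HasDerivWithinAt (fun τ => ⟪e τ, P (e τ)⟫) (2 * ⟪P (e t), v⟫) s t := by
  refine (he.inner ℝ (P.hasFDerivAt.comp_hasDerivWithinAt t he)).congr_deriv ?_
  have hsymm : ⟪e t, P v⟫ = ⟪P (e t), v⟫ := (hP (e t) v).symm
  rw [Function.comp_apply, hsymm, real_inner_comm]
  ring

lemma abs_inner_apply_le_opNorm_mul (hP : (P : E →ₗ[ℝ] E).IsSymmetric) (D : E →L[ℝ] E)
    {x w : E} {k : ℝ} (hw : ‖w‖ ≤ k * ‖x‖) : |⟪P x, D w⟫| ≤ ‖P * D‖ * k * ‖x‖ ^ 2 := by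
  have hsymm : ⟪P x, D w⟫ = ⟪x, (P * D) w⟫ := hP x (D w)
  calc |⟪P x, D w⟫| ≤ ‖x‖ * ‖(P * D) w‖ := hsymm ▸ abs_real_inner_le_norm _ _
    _ ≤ ‖x‖ * (‖P * D‖ * (k * ‖x‖)) := by
      gcongr
      exact (P * D).le_opNorm_of_le hw
    _ = ‖P * D‖ * k * ‖x‖ ^ 2 := by ring

variable {lo hi : ℝ} (hlo : 0 < lo) (hlower : ∀ x, lo * ‖x‖ ^ 2 ≤ ⟪x, P x⟫)
  (hupper : ∀ x, ⟪x, P x⟫ ≤ hi * ‖x‖ ^ 2)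

include hlo hlower hupper

lemma norm_le_sqrt_mul_norm_of_razumikhin {κ : ℝ} (hκ : 0 ≤ κ) {x y : E}
    (hxy : ⟪y, P y⟫ ≤ κ * ⟪x, P x⟫) : ‖y‖ ≤ √(κ * hi / lo) * ‖x‖ := by
  refine le_sqrt_div_mul_of_mul_sq_le_mul_sq hlo (norm_nonneg x) ?_
  calc lo * ‖y‖ ^ 2 ≤ κ * ⟪x, P x⟫ := (hlower y).trans hxy
    _ ≤ κ * (hi * ‖x‖ ^ 2) := by gcongr; exact hupper x
    _ = κ * hi * ‖x‖ ^ 2 := by ring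

theorem norm_le_exp_add_of_dissipation (hhi : 0 < hi) (hP : (P : E →ₗ[ℝ] E).IsSymmetric)
    {c s : ℝ} (hc : 0 < c) (hs : 0 ≤ s) {e e' : ℝ → E} (he : ContinuousOn e (Ici 0))
    (he' : ∀ t, 0 ≤ t → HasDerivWithinAt e (e' t) (Ici t) t)
    (hdiss : ∀ t, 0 ≤ t → 2 * ⟪P (e t), e' t⟫ ≤ -c * ‖e t‖ ^ 2 + s * ‖e t‖)
    {t : ℝ} (ht : 0 ≤ t) :
    ‖e t‖ ≤ √(hi / lo) * (‖e 0‖ * Real.exp (-(c / (4 * hi)) * t) + s / c) := by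
  have hdecay : ∀ τ, 0 ≤ τ →
      2 * ⟪P (e τ), e' τ⟫ ≤ -(c / (2 * hi)) * ⟪e τ, P (e τ)⟫ + s ^ 2 / (2 * c) := by
    intro τ hτ
    have hV : c / (2 * hi) * ⟪e τ, P (e τ)⟫ ≤ c / 2 * ‖e τ‖ ^ 2 := by
      calc _ ≤ c / (2 * hi) * (hi * ‖e τ‖ ^ 2) := by gcongr; exact hupper _
        _ = c / 2 * ‖e τ‖ ^ 2 := by field_simp
    linarith [hdiss τ hτ, mul_le_half_mul_sq_add_sq_div hc s ‖e τ‖]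
  have hgronwall := le_mul_exp_add_div_of_deriv_right_le (by positivity) (by positivity)
    (ContinuousOn.inner he (P.continuous.comp_continuousOn he))
    (fun τ hτ => hasDerivWithinAt_inner_apply_self hP (he' τ hτ)) hdecay ht
  set a := ‖e 0‖ * Real.exp (-(c / (4 * hi)) * t) with ha
  have ha_sq : a ^ 2 = ‖e 0‖ ^ 2 * Real.exp (-(c / (2 * hi)) * t) := by
    rw [ha, mul_pow, ← Real.exp_nat_mul]
    congr 2
    push_cast
    ring
  have ha_nonneg : 0 ≤ a := by positivity
  refine le_sqrt_div_mul_of_mul_sq_le_mul_sq hlo (by positivity) ?_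
  calc lo * ‖e t‖ ^ 2 ≤ ⟪e t, P (e t)⟫ := hlower _
    _ ≤ hi * ‖e 0‖ ^ 2 * Real.exp (-(c / (2 * hi)) * t)
        + s ^ 2 / (2 * c) / (c / (2 * hi)) := by
      refine hgronwall.trans ?_
      gcongr
      exact hupper _
    _ = hi * (a ^ 2 + (s / c) ^ 2) := by
      rw [ha_sq]
      field_simp
    _ ≤ hi * (a + s / c) ^ 2 := by
      gcongr
      exact pow_add_pow_le ha_nonneg (by positivity) two_ne_zero

end QuadraticForm

/-- The data of the delayed observer error dynamics on `E`: `M` is the closed-loop operator, `h` the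
artificial delay, and `LC₃`, `LD₄`, `LD₅` are single operators standing for the products of the gain
`L` with the delay couplings. -/
structure DelayedErrorSystem (E : Type*) [NormedAddCommGroup E] [InnerProductSpace ℝ E] where
  (M D₂ LC₃ LD₄ LD₅ L : E →L[ℝ] E)
  h : ℝ

namespace DelayedErrorSystem

variable {E : Type*} [NormedAddCommGroup E] [InnerProductSpace ℝ E] (S : DelayedErrorSystem E)

/-- The right-hand side of the error dynamics: `x`, `y`, `z` stand for `e t`, `e (t - h)`,
`e (t - 2 h)`, and `g₂`, `g₃` for the perturbations `Γ₂ t`, `Γ₃ t`. -/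
noncomputable def field (x y z g₂ g₃ : E) : E :=
  S.M x + (1 / S.h) • S.D₂ (x - y) + S.LC₃ y + (1 / S.h) • S.LD₄ y
    - (1 / (2 * S.h)) • S.LD₅ (x + z) - g₂ - S.L g₃

/-- A solution of the error dynamics on `[0, ∞)`, in the sense of right derivatives so that the
history prescribed on `[-2 h, 0]` may have a kink at `0`. -/
structure IsSolution (Γ₂ Γ₃ e : ℝ → E) : Prop where
  continuousOn : ContinuousOn e (Ici 0)
  hasDerivWithinAt : ∀ t, 0 ≤ t → HasDerivWithinAt e
    (S.field (e t) (e (t - S.h)) (e (t - 2 * S.h)) (Γ₂ t) (Γ₃ t)) (Ici t) t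

/-- The constant `c₉` of the paper, for a nominal decay `q` of `V x = ⟪x, P x⟫` under `M` (there
`λ_min Q`) and delayed states of norm at most `c` times the current one (there `c₈`). -/
noncomputable def decayRate (P : E →L[ℝ] E) (q c : ℝ) : ℝ :=
  q - 2 * ‖P * S.LC₃‖ * c
    - (2 * ‖P * S.D₂‖ + ‖P * S.LD₅‖ + (2 * ‖P * S.D₂‖ + 2 * ‖P * S.LD₄‖) * c
        + ‖P * S.LD₅‖ * c) / S.h

lemma two_mul_inner_field (p x y z g₂ g₃ : E) :
    2 * ⟪p, S.field x y z g₂ g₃⟫ = 2 * ⟪p, S.M x⟫ + 2 * ⟪p, S.LC₃ y⟫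
      + (2 * ⟪p, S.D₂ x⟫ - 2 * ⟪p, S.D₂ y⟫ + 2 * ⟪p, S.LD₄ y⟫
          - ⟪p, S.LD₅ x⟫ - ⟪p, S.LD₅ z⟫) / S.h
      - 2 * ⟪p, g₂ + S.L g₃⟫ := by
  simp only [field, inner_add_right, inner_sub_right, map_add, map_sub, inner_smul_right]
  ring

variable {S} {P : E →L[ℝ] E} (hP : (P : E →ₗ[ℝ] E).IsSymmetric) {q : ℝ}
  (hM : ∀ x, 2 * ⟪P x, S.M x⟫ ≤ -q * ‖x‖ ^ 2) (hh : 0 < S.h)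

include hP hM hh

lemma two_mul_inner_field_le {c : ℝ} {x y z : E} (hy : ‖y‖ ≤ c * ‖x‖) (hz : ‖z‖ ≤ c * ‖x‖)
    (g₂ g₃ : E) :
    2 * ⟪P x, S.field x y z g₂ g₃⟫ ≤
      -S.decayRate P q c * ‖x‖ ^ 2 + 2 * ‖P‖ * (‖g₂‖ + ‖S.L‖ * ‖g₃‖) * ‖x‖ := by
  have hx : ‖x‖ ≤ 1 * ‖x‖ := (one_mul _).ge
  have hLC₃ := abs_le.1 (abs_inner_apply_le_opNorm_mul hP S.LC₃ hy)
  have hdelay : 2 * ⟪P x, S.D₂ x⟫ - 2 * ⟪P x, S.D₂ y⟫ + 2 * ⟪P x, S.LD₄ y⟫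
        - ⟪P x, S.LD₅ x⟫ - ⟪P x, S.LD₅ z⟫ ≤
      (2 * ‖P * S.D₂‖ + ‖P * S.LD₅‖ + (2 * ‖P * S.D₂‖ + 2 * ‖P * S.LD₄‖) * c
        + ‖P * S.LD₅‖ * c) * ‖x‖ ^ 2 := by
    linarith [(abs_le.1 (abs_inner_apply_le_opNorm_mul hP S.D₂ hx)).2,
      (abs_le.1 (abs_inner_apply_le_opNorm_mul hP S.D₂ hy)).1,
      (abs_le.1 (abs_inner_apply_le_opNorm_mul hP S.LD₄ hy)).2,
      (abs_le.1 (abs_inner_apply_le_opNorm_mul hP S.LD₅ hx)).1,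
      (abs_le.1 (abs_inner_apply_le_opNorm_mul hP S.LD₅ hz)).1]
  have hpert : |⟪P x, g₂ + S.L g₃⟫| ≤ ‖P‖ * (‖g₂‖ + ‖S.L‖ * ‖g₃‖) * ‖x‖ :=
    calc |⟪P x, g₂ + S.L g₃⟫| ≤ ‖P x‖ * ‖g₂ + S.L g₃‖ := abs_real_inner_le_norm _ _
      _ ≤ (‖P‖ * ‖x‖) * (‖g₂‖ + ‖S.L‖ * ‖g₃‖) := by
        gcongr
        · exact P.le_opNorm x
        · exact norm_add_le_of_le le_rfl (S.L.le_opNorm g₃)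
      _ = ‖P‖ * (‖g₂‖ + ‖S.L‖ * ‖g₃‖) * ‖x‖ := by ring
  have hdelay_div := div_le_div_of_nonneg_right hdelay hh.le
  rw [mul_div_right_comm] at hdelay_div
  rw [two_mul_inner_field, decayRate]
  linarith [hM x, hLC₃.2, (abs_le.1 hpert).1]

variable {lo hi κ : ℝ} (hlo : 0 < lo) (hhi : 0 < hi) (hlower : ∀ x, lo * ‖x‖ ^ 2 ≤ ⟪x, P x⟫)
  (hupper : ∀ x, ⟪x, P x⟫ ≤ hi * ‖x‖ ^ 2) (hκ : 0 ≤ κ)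
  (hrate : 0 < S.decayRate P q √(κ * hi / lo))

include hlo hhi hlower hupper hκ hrate

theorem IsSolution.norm_le {Γ₂ Γ₃ e : ℝ → E} (he : S.IsSolution Γ₂ Γ₃ e)
    (hraz : ∀ t, 0 ≤ t → ⟪e (t - S.h), P (e (t - S.h))⟫ ≤ κ * ⟪e t, P (e t)⟫)
    (hraz₂ : ∀ t, 0 ≤ t → ⟪e (t - 2 * S.h), P (e (t - 2 * S.h))⟫ ≤ κ * ⟪e t, P (e t)⟫)
    {w : ℝ} (hw : ∀ t, 0 ≤ t → ‖Γ₂ t‖ + ‖S.L‖ * ‖Γ₃ t‖ ≤ w) {t : ℝ} (ht : 0 ≤ t) :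
    ‖e t‖ ≤ √(hi / lo) *
      (‖e 0‖ * Real.exp (-(S.decayRate P q √(κ * hi / lo) / (4 * hi)) * t)
        + 2 * ‖P‖ * w / S.decayRate P q √(κ * hi / lo)) := by
  have hw_nonneg : 0 ≤ w := le_trans (by positivity) (hw 0 le_rfl)
  refine norm_le_exp_add_of_dissipation hlo hlower hupper hhi hP hrate (by positivity)
    he.continuousOn he.hasDerivWithinAt (fun τ hτ => ?_) ht
  refine (two_mul_inner_field_le hP hM hh
    (norm_le_sqrt_mul_norm_of_razumikhin hlo hlower hupper hκ (hraz τ hτ))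
    (norm_le_sqrt_mul_norm_of_razumikhin hlo hlower hupper hκ (hraz₂ τ hτ)) _ _).trans ?_
  gcongr
  exact hw τ hτ

end DelayedErrorSystem

theorem delayed_observer_perturbed_convergence_general {E : Type*} [NormedAddCommGroup E]
    [InnerProductSpace ℝ E] {S : DelayedErrorSystem E} (hh : 0 < S.h) {P : E →L[ℝ] E}
    (hP : (P : E →ₗ[ℝ] E).IsSymmetric) {lo hi q κ g : ℝ} (hlo : 0 < lo) (hhi : 0 < hi)
    (hlower : ∀ x, lo * ‖x‖ ^ 2 ≤ ⟪x, P x⟫) (hupper : ∀ x, ⟪x, P x⟫ ≤ hi * ‖x‖ ^ 2)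
    (hM : ∀ x, 2 * ⟪P x, S.M x⟫ ≤ -q * ‖x‖ ^ 2) (hκ : 0 ≤ κ) (hg : 0 ≤ g)
    (hrate : 0 < S.decayRate P q √(κ * hi / lo)) :
    ∃ α₂ β₂ γ₂ γ₃ : ℝ, 0 < α₂ ∧ 0 < β₂ ∧ 0 < γ₂ ∧ 0 < γ₃ ∧
      ∀ d₂ m₀ : ℝ, 0 ≤ d₂ → 0 ≤ m₀ → ∀ Γ₂ Γ₃ : ℝ → E,
        (∀ t, 0 ≤ t → ‖Γ₂ t‖ ≤ d₂ / 2 * S.h) →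
        (∀ t, 0 ≤ t → ‖Γ₃ t‖ ≤ g * (S.h * m₀ + d₂ * S.h)) →
      ∀ e, S.IsSolution Γ₂ Γ₃ e →
        (∀ t, 0 ≤ t → ⟪e (t - S.h), P (e (t - S.h))⟫ ≤ κ * ⟪e t, P (e t)⟫) →
        (∀ t, 0 ≤ t → ⟪e (t - 2 * S.h), P (e (t - 2 * S.h))⟫ ≤ κ * ⟪e t, P (e t)⟫) →
        ∀ t, 0 ≤ t →
          ‖e t‖ ≤ α₂ * ‖e 0‖ * Real.exp (-β₂ * t) + γ₂ * d₂ * S.h + γ₃ * m₀ * S.h := by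
  set c := S.decayRate P q √(κ * hi / lo) with hc
  set α := √(hi / lo) with hα
  refine ⟨α, c / (4 * hi), α * (2 * ‖P‖ * (1 / 2 + ‖S.L‖ * g) / c) + 1,
    α * (2 * ‖P‖ * (‖S.L‖ * g) / c) + 1,
    by positivity, by positivity, by positivity, by positivity, ?_⟩
  intro d₂ m₀ hd₂ hm₀ Γ₂ Γ₃ hΓ₂ hΓ₃ e he hraz hraz₂ t ht
  have hw : ∀ τ, 0 ≤ τ →
      ‖Γ₂ τ‖ + ‖S.L‖ * ‖Γ₃ τ‖ ≤ d₂ / 2 * S.h + ‖S.L‖ * (g * (S.h * m₀ + d₂ * S.h)) :=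
    fun τ hτ => by gcongr; exacts [hΓ₂ τ hτ, hΓ₃ τ hτ]
  have hbound := he.norm_le hP hM hh hlo hhi hlower hupper hκ hrate hraz hraz₂ hw ht
  rw [← hc, ← hα] at hbound
  have hslack : 0 ≤ d₂ * S.h + m₀ * S.h := by positivity
  linear_combination hbound + hslack

section Matrix

variable {𝕜 n : Type*} [RCLike 𝕜] [Fintype n] [DecidableEq n]

open scoped MatrixOrder in
lemma re_inner_toEuclideanCLM_mono {A B : Matrix n n 𝕜} (hAB : A ≤ B) (x : EuclideanSpace 𝕜 n) :
    RCLike.re (inner 𝕜 x (toEuclideanCLM (𝕜 := 𝕜) A x)) ≤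
      RCLike.re (inner 𝕜 x (toEuclideanCLM (𝕜 := 𝕜) B x)) := by
  have hnonneg := (isPositive_toEuclideanLin_iff.2 (Matrix.le_iff.1 hAB)).re_inner_nonneg_right x
  rw [← coe_toEuclideanCLM_eq_toEuclideanLin, map_sub] at hnonneg
  simpa [inner_sub_right] using hnonneg

lemma re_inner_toEuclideanCLM_algebraMap (r : ℝ) (x : EuclideanSpace 𝕜 n) :
    RCLike.re (inner 𝕜 x (toEuclideanCLM (𝕜 := 𝕜) (algebraMap ℝ (Matrix n n 𝕜) r) x)) =
      r * ‖x‖ ^ 2 := by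
  have hscalar : algebraMap ℝ (Matrix n n 𝕜) r = (r : 𝕜) • 1 := by
    rw [Algebra.algebraMap_eq_smul_one, RCLike.real_smul_eq_coe_smul (K := 𝕜)]
  rw [hscalar, map_smul, map_one, _root_.smul_apply, one_apply_eq_self, inner_smul_right,
    RCLike.re_ofReal_mul, inner_self_eq_norm_sq]

open scoped MatrixOrder in
lemma iInf_eigenvalues_mul_norm_sq_le_re_inner {A : Matrix n n 𝕜} (hA : A.IsHermitian)
    (x : EuclideanSpace 𝕜 n) :
    (⨅ i, hA.eigenvalues i) * ‖x‖ ^ 2 ≤ RCLike.re (inner 𝕜 x (toEuclideanCLM (𝕜 := 𝕜) A x)) := by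
  have hle : algebraMap ℝ _ (⨅ i, hA.eigenvalues i) ≤ A := by
    rw [algebraMap_le_iff_le_spectrum (ha := hA.isSelfAdjoint),
      hA.spectrum_real_eq_range_eigenvalues]
    exact forall_mem_range.2 (Finite.ciInf_le _)
  exact (re_inner_toEuclideanCLM_algebraMap _ x).ge.trans (re_inner_toEuclideanCLM_mono hle x)

open scoped MatrixOrder in
lemma re_inner_le_iSup_eigenvalues_mul_norm_sq {A : Matrix n n 𝕜} (hA : A.IsHermitian)
    (x : EuclideanSpace 𝕜 n) :
    RCLike.re (inner 𝕜 x (toEuclideanCLM (𝕜 := 𝕜) A x)) ≤ (⨆ i, hA.eigenvalues i) * ‖x‖ ^ 2 := by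
  have hle : A ≤ algebraMap ℝ _ (⨆ i, hA.eigenvalues i) := by
    rw [le_algebraMap_iff_spectrum_le (ha := hA.isSelfAdjoint),
      hA.spectrum_real_eq_range_eigenvalues]
    exact forall_mem_range.2 (Finite.le_ciSup _)
  exact (re_inner_toEuclideanCLM_mono hle x).trans_eq (re_inner_toEuclideanCLM_algebraMap _ x)

open scoped ComplexOrder in
lemma iInf_eigenvalues_pos [Nonempty n] {A : Matrix n n 𝕜} (hA : A.PosDef) :
    0 < ⨅ i, hA.1.eigenvalues i := by
  obtain ⟨i, hi⟩ := exists_eq_ciInf_of_finite (f := hA.1.eigenvalues)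
  exact hi ▸ hA.eigenvalues_pos i

open scoped ComplexOrder in
lemma iSup_eigenvalues_pos [Nonempty n] {A : Matrix n n 𝕜} (hA : A.PosDef) :
    0 < ⨆ i, hA.1.eigenvalues i := by
  obtain ⟨i, hi⟩ := exists_eq_ciSup_of_finite (f := hA.1.eigenvalues)
  exact hi ▸ hA.eigenvalues_pos i

lemma two_mul_inner_eq_neg_inner_of_lyapunov {M P Q : Matrix n n ℝ} (hP : P.IsSymm)
    (hLyap : Mᵀ * P + P * M = -Q) (x : EuclideanSpace ℝ n) :
    2 * ⟪toEuclideanCLM (𝕜 := ℝ) P x, toEuclideanCLM (𝕜 := ℝ) M x⟫ =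
      -⟪x, toEuclideanCLM (𝕜 := ℝ) Q x⟫ := by
  have hMP : x ⬝ᵥ (Mᵀ * P) *ᵥ x = M *ᵥ x ⬝ᵥ P *ᵥ x := by
    rw [← mulVec_mulVec, dotProduct_mulVec, vecMul_transpose]
  have hPM : x ⬝ᵥ (P * M) *ᵥ x = M *ᵥ x ⬝ᵥ P *ᵥ x := by
    rw [← mulVec_mulVec, dotProduct_mulVec, ← mulVec_transpose, hP.eq, dotProduct_comm]
  have hform := congrArg (fun A : Matrix n n ℝ => x ⬝ᵥ A *ᵥ x) hLyap
  simp only [add_mulVec, neg_mulVec, dotProduct_add, dotProduct_neg, hMP, hPM] at hform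
  rw [real_inner_comm, inner_toEuclideanCLM, inner_toEuclideanCLM, ofLp_toEuclideanCLM, two_mul,
    hform]

lemma two_mul_inner_le_neg_iInf_eigenvalues_of_lyapunov {M P Q : Matrix n n ℝ} (hP : P.IsSymm)
    (hQ : Q.IsHermitian) (hLyap : Mᵀ * P + P * M = -Q) (x : EuclideanSpace ℝ n) :
    2 * ⟪toEuclideanCLM (𝕜 := ℝ) P x, toEuclideanCLM (𝕜 := ℝ) M x⟫ ≤
      -(⨅ i, hQ.eigenvalues i) * ‖x‖ ^ 2 := by
  rw [two_mul_inner_eq_neg_inner_of_lyapunov hP hLyap, neg_mul]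
  exact neg_le_neg (iInf_eigenvalues_mul_norm_sq_le_re_inner hQ x)

/-- The error system on Euclidean space with the given coefficient matrices. -/
noncomputable def DelayedErrorSystem.ofMatrix (M D₂ LC₃ LD₄ LD₅ L : Matrix n n ℝ) (h : ℝ) :
    DelayedErrorSystem (EuclideanSpace ℝ n) where
  M := toEuclideanCLM (𝕜 := ℝ) M
  D₂ := toEuclideanCLM (𝕜 := ℝ) D₂
  LC₃ := toEuclideanCLM (𝕜 := ℝ) LC₃
  LD₄ := toEuclideanCLM (𝕜 := ℝ) LD₄
  LD₅ := toEuclideanCLM (𝕜 := ℝ) LD₅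
  L := toEuclideanCLM (𝕜 := ℝ) L
  h := h

end Matrix

lemma DelayedErrorSystem.decayRate_ofMatrix {N : ℕ}
    (M D₂ LC₃ LD₄ LD₅ L P : Matrix (Fin N) (Fin N) ℝ) (h q c : ℝ) :
    (ofMatrix M D₂ LC₃ LD₄ LD₅ L h).decayRate (toEuclideanCLM (𝕜 := ℝ) P) q c =
      q - l2OpNorm ((2 : ℝ) • (P * LC₃)) * c
        - (l2OpNorm ((2 : ℝ) • (P * D₂)) + l2OpNorm (P * LD₅)
            + (l2OpNorm ((2 : ℝ) • (P * D₂)) + l2OpNorm ((2 : ℝ) • (P * LD₄))) * c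
            + l2OpNorm (P * LD₅) * c) / h := by
  simp only [decayRate, ofMatrix, l2OpNorm, map_smul, map_mul, norm_smul, Real.norm_ofNat]

/-- Theorem 1 (perturbed case): there exist positive constants `α₂, β₂, γ₂, γ₃` such that
every solution of the perturbed delayed observer error dynamics satisfying the Razumikhin
condition obeys `‖e(t)‖ ≤ α₂‖e(0)‖e^{-β₂ t} + γ₂ d₂ h + γ₃ m₀ h`. -/
theorem delayed_observer_perturbed_convergence
    (N : ℕ) (hN : 1 ≤ N) (h : ℝ) (hh : 0 < h) (κ : ℝ) (hκ : 1 < κ)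
    (M D2 LC3 LD4 LD5 L G P Q : Matrix (Fin N) (Fin N) ℝ)
    (hPsymm : P.IsSymm) (hQsymm : Q.IsSymm)
    (hP : P.PosDef) (hQ : Q.PosDef)
    (hLyap : Mᵀ * P + P * M = -Q)
    (lminP lmaxP lminQ c₈ c₉ : ℝ)
    (hlminP : lminP = ⨅ i, hP.1.eigenvalues i)
    (hlmaxP : lmaxP = ⨆ i, hP.1.eigenvalues i)
    (hlminQ : lminQ = ⨅ i, hQ.1.eigenvalues i)
    (hc₈ : c₈ = Real.sqrt (κ * lmaxP / lminP))
    (hc₉ : c₉ = lminQ - l2OpNorm ((2 : ℝ) • (P * LC3)) * c₈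
      - (l2OpNorm ((2 : ℝ) • (P * D2)) + l2OpNorm (P * LD5)
          + (l2OpNorm ((2 : ℝ) • (P * D2)) + l2OpNorm ((2 : ℝ) • (P * LD4))) * c₈
          + l2OpNorm (P * LD5) * c₈) / h)
    (hc₉pos : 0 < c₉) :
    ∃ α₂ β₂ γ₂ γ₃ : ℝ, 0 < α₂ ∧ 0 < β₂ ∧ 0 < γ₂ ∧ 0 < γ₃ ∧
      ∀ (d₂ m₀ : ℝ), 0 ≤ d₂ → 0 ≤ m₀ →
      ∀ Γ₂ Γ₃ : ℝ → EuclideanSpace ℝ (Fin N),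
        Continuous Γ₂ → Continuous Γ₃ →
        (∀ t : ℝ, 0 ≤ t → ‖Γ₂ t‖ ≤ d₂ / 2 * h) →
        (∀ t : ℝ, 0 ≤ t → ‖Γ₃ t‖ ≤ l2OpNorm G * (h * m₀ + d₂ * h)) →
      ∀ e : ℝ → EuclideanSpace ℝ (Fin N), Differentiable ℝ e →
        (∀ t : ℝ, e t ≠ 0) →
        (∀ t : ℝ, 0 ≤ t →
          deriv e t = Matrix.toEuclideanLin M (e t)
            + (1 / h) • Matrix.toEuclideanLin D2 (e t - e (t - h))
            + Matrix.toEuclideanLin LC3 (e (t - h))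
            + (1 / h) • Matrix.toEuclideanLin LD4 (e (t - h))
            - (1 / (2 * h)) • Matrix.toEuclideanLin LD5 (e t + e (t - 2 * h))
            - Γ₂ t - Matrix.toEuclideanLin L (Γ₃ t)) →
        (∀ t : ℝ, 0 ≤ t → ∀ θ ∈ Set.Icc (-(2 * h)) (0 : ℝ),
          e (t + θ) ⬝ᵥ (P *ᵥ e (t + θ)) ≤ κ * (e t ⬝ᵥ (P *ᵥ e t))) →
        ∀ t : ℝ, 0 ≤ t →
          ‖e t‖ ≤ α₂ * ‖e 0‖ * Real.exp (-β₂ * t) + γ₂ * d₂ * h + γ₃ * m₀ * h := by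
  have : Nonempty (Fin N) := ⟨⟨0, hN⟩⟩
  subst hlminP hlmaxP hlminQ hc₈ hc₉
  rw [← DelayedErrorSystem.decayRate_ofMatrix M] at hc₉pos
  obtain ⟨α₂, β₂, γ₂, γ₃, hα₂, hβ₂, hγ₂, hγ₃, hbound⟩ :=
    delayed_observer_perturbed_convergence_general (g := l2OpNorm G)
      (S := .ofMatrix M D2 LC3 LD4 LD5 L h) hh
      (isSymmetric_toEuclideanLin_iff.2 hP.1) (iInf_eigenvalues_pos hP) (iSup_eigenvalues_pos hP)
      (iInf_eigenvalues_mul_norm_sq_le_re_inner hP.1)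
      (re_inner_le_iSup_eigenvalues_mul_norm_sq hP.1)
      (two_mul_inner_le_neg_iInf_eigenvalues_of_lyapunov hPsymm hQ.1 hLyap)
      (zero_lt_one.trans hκ).le (norm_nonneg _) hc₉pos
  simp only [inner_toEuclideanCLM] at hbound
  refine ⟨α₂, β₂, γ₂, γ₃, hα₂, hβ₂, hγ₂, hγ₃, ?_⟩
  intro d₂ m₀ hd₂ hm₀ Γ₂ Γ₃ _ _ hΓ₂ hΓ₃ e he _ hdyn hraz
  exact hbound d₂ m₀ hd₂ hm₀ Γ₂ Γ₃ hΓ₂ hΓ₃ e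
    ⟨he.continuous.continuousOn,
      fun t ht => (he t).hasDerivAt.hasDerivWithinAt.congr_deriv (hdyn t ht)⟩
    (fun t ht => hraz t ht (-h) ⟨by linarith, by linarith⟩)
    (fun t ht => hraz t ht (-(2 * h)) ⟨by linarith, by linarith⟩)
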